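/- Assume (Φ1). Then the functions g and h are continuously differentiable on ℝ, vanish for y ≤ 0, are strictly increasing on [0,∞), and satisfy g(y) → ∞ and h(y) → ∞ as y → ∞; in particular the restriction of g to [0,∞) is a continuous strictly increasing bijection onto [0,∞). The macroscopic equation of state P := P_Φ := h ∘ (g|_{[0,∞)})⁻¹ satisfies: P ∈ C¹([0,∞)) with P(0) = 0; 0 < P′(ρ) < 1/3 for all ρ > 0; there exists a constant C > 0 (depending only on Φ) with |P(ρ) − ρ/3| ≤ C ρ^{1/2} for all ρ ≥ 0; and P : [0,∞) → [0,∞) is a bijection whose inverse satisfies |P⁻¹(q) − 3q| ≤ C q^{1/2} for all q > 0. -/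

import Mathlib

open MeasureTheory

noncomputable section

/-- The macroscopic energy density `g(y)` induced by the microscopic ansatz `Φ` (extended by
`0` for `y ≤ 0`). -/
def gfun (Φ : ℝ → ℝ) (y : ℝ) : ℝ :=
  if y ≤ 0 then 0 else
    4 * Real.pi * Real.exp (4 * y) *
      ∫ η in (0:ℝ)..(1 - Real.exp (-y)),
        Φ η * (1 - η) ^ 2 * Real.sqrt ((1 - η) ^ 2 - Real.exp (-2 * y))

/-- The macroscopic pressure `h(y)` induced by the microscopic ansatz `Φ` (extended by `0` for
`y ≤ 0`). -/
def hfun (Φ : ℝ → ℝ) (y : ℝ) : ℝ :=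
  if y ≤ 0 then 0 else
    4 * Real.pi / 3 * Real.exp (4 * y) *
      ∫ η in (0:ℝ)..(1 - Real.exp (-y)),
        Φ η * Real.sqrt ((1 - η) ^ 2 - Real.exp (-2 * y)) ^ 3

open Set Filter Topology

/-- The moment `∫₀¹ φ(x) √(x² - r) dx`. -/
def sqrtMoment (φ : ℝ → ℝ) (r : ℝ) : ℝ := ∫ x in Ioc (0:ℝ) 1, φ x * √(x ^ 2 - r)

/-- The moment `∫₀¹ φ(x) (x² - r)₊^{3/2} dx`. -/
def cubeMoment (φ : ℝ → ℝ) (r : ℝ) : ℝ := ∫ x in Ioc (0:ℝ) 1, φ x * √(x ^ 2 - r) ^ 3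

/-- The moment `∫ φ(x) (x² - r)^{-1/2} dx` over those `x ∈ (0,1]` with `x² > r`. -/
def invSqrtMoment (φ : ℝ → ℝ) (r : ℝ) : ℝ := ∫ x in Ioc (0:ℝ) 1, φ x * (√(x ^ 2 - r))⁻¹

lemma abs_sqrt_sub_sqrt_le (a : ℝ) {b : ℝ} (hb : b ≠ 0) :
    |√a - √b| ≤ |a - b| * (√|b|)⁻¹ := by
  rw [← div_eq_mul_inv, le_div_iff₀ (Real.sqrt_pos.2 (abs_pos.2 hb))]
  rcases lt_or_gt_of_ne hb with hb | hb
  · rw [Real.sqrt_eq_zero_of_nonpos hb.le, sub_zero, abs_of_nonneg (Real.sqrt_nonneg a),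
      abs_of_neg hb]
    by_cases ha : a ≤ 0
    · simp [Real.sqrt_eq_zero_of_nonpos ha]
    · push Not at ha
      have h1 := Real.sq_sqrt ha.le
      have h2 := Real.sq_sqrt (neg_nonneg.2 hb.le)
      rw [abs_of_pos (by linarith)]
      nlinarith [sq_nonneg (√a - √(-b)), sq_nonneg (√a), sq_nonneg (√(-b))]
  · rw [abs_of_pos hb]
    have h2 := Real.sq_sqrt hb.le
    have hb' := Real.sqrt_pos.2 hb
    by_cases ha : a ≤ 0
    · rw [Real.sqrt_eq_zero_of_nonpos ha, zero_sub, abs_neg, abs_of_pos hb', abs_of_neg (by linarith)]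
      nlinarith
    · push Not at ha
      have h1 := Real.sq_sqrt ha.le
      have ha' := Real.sqrt_nonneg a
      have : a - b = (√a - √b) * (√a + √b) := by nlinarith
      rw [this, abs_mul]
      apply mul_le_mul_of_nonneg_left _ (abs_nonneg _)
      rw [abs_of_nonneg (by linarith)]; linarith

lemma intervalIntegrable_inv_sqrt_abs (a b : ℝ) :
    IntervalIntegrable (fun x : ℝ => (√|x|)⁻¹) volume a b := by
  have h : ∀ a b : ℝ, IntervalIntegrable (fun x : ℝ => (√x)⁻¹) volume a b := by
    intro a b
    refine (intervalIntegral.intervalIntegrable_rpow' (a := a) (b := b)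
      (r := -(1/2)) (by norm_num)).congr ?_
    intro x _
    rcases le_or_gt 0 x with hx | hx
    · simp only [Real.sqrt_eq_rpow, Real.rpow_neg hx]
    · simp only
      rw [Real.sqrt_eq_zero_of_nonpos hx.le, Real.rpow_def_of_neg hx]
      have : -(1 / 2 : ℝ) * Real.pi = -(Real.pi / 2) := by ring
      rw [this, Real.cos_neg, Real.cos_pi_div_two, mul_zero, inv_zero]
  have h1 := (h (-a) (-b)).comp_sub_left 0
  simp only [zero_sub, neg_neg] at h1
  refine ((h a b).add h1).congr fun x _ => ?_
  rcases le_total 0 x with hx | hx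
  · simp [abs_of_nonneg hx, Real.sqrt_eq_zero_of_nonpos (neg_nonpos.2 hx)]
  · simp [abs_of_nonpos hx, Real.sqrt_eq_zero_of_nonpos hx]

lemma integrableOn_inv_sqrt_abs_sq_sub {r : ℝ} (hr : 0 < r) (b : ℝ) :
    IntegrableOn (fun x : ℝ => (√|x ^ 2 - r|)⁻¹) (Ioc 0 b) := by
  rcases le_or_gt b 0 with hb | hb
  · simp [Ioc_eq_empty_of_le hb]
  have h1 : IntegrableOn (fun x : ℝ => (√√r)⁻¹ * (√|x - √r|)⁻¹) (Ioc 0 b) := by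
    have := ((intervalIntegrable_inv_sqrt_abs (0 - √r) (b - √r)).comp_sub_right (√r)).const_mul
      (√√r)⁻¹
    simp only [sub_add_cancel] at this
    exact (intervalIntegrable_iff_integrableOn_Ioc_of_le hb.le).1 this
  refine Integrable.mono' h1 (Measurable.aestronglyMeasurable (by fun_prop)) ?_
  refine (ae_restrict_iff' measurableSet_Ioc).2 (Eventually.of_forall fun x hx => ?_)
  have hs := Real.sqrt_pos.2 hr
  have e : x ^ 2 - r = (x + √r) * (x - √r) := by nlinarith [Real.sq_sqrt hr.le]
  have hx0 : 0 < x := hx.1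
  rw [Real.norm_of_nonneg (by positivity), e, abs_mul, Real.sqrt_mul (abs_nonneg _), mul_inv,
    abs_of_pos (by linarith)]
  gcongr
  linarith

lemma ae_sq_ne {r : ℝ} (hr : 0 < r) : ∀ᵐ x ∂(volume.restrict (Ioc (0:ℝ) 1)), x ^ 2 - r ≠ 0 := by
  have : ∀ᵐ x : ℝ, x ≠ √r := by simp [ae_iff]
  filter_upwards [ae_restrict_of_ae this, ae_restrict_mem measurableSet_Ioc] with x h1 h2 h3
  exact h1 ((Real.sqrt_eq_iff_eq_sq hr.le h2.1.le).2 (by linarith)).symm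

lemma inv_sqrt_le (v : ℝ) : (√v)⁻¹ ≤ (√|v|)⁻¹ := by
  rcases le_or_gt v 0 with hv | hv
  · rw [Real.sqrt_eq_zero_of_nonpos hv]; simp
  · rw [abs_of_pos hv]

lemma integrableOn_inv_sqrt_sq_sub {r : ℝ} (hr : 0 < r) (b : ℝ) :
    IntegrableOn (fun x : ℝ => (√(x ^ 2 - r))⁻¹) (Ioc 0 b) := by
  refine Integrable.mono' (integrableOn_inv_sqrt_abs_sq_sub hr b)
    (Measurable.aestronglyMeasurable (by fun_prop)) (Eventually.of_forall fun x => ?_)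
  rw [Real.norm_of_nonneg (by positivity)]
  exact inv_sqrt_le _

lemma sqrt_sq_sub_le_one {x r : ℝ} (hx : x ∈ Ioc (0:ℝ) 1) (hr : 0 < r) : √(x ^ 2 - r) ≤ 1 := by
  rw [Real.sqrt_le_one]
  nlinarith [hx.1, hx.2]

section Moments

variable {φ : ℝ → ℝ} {M : ℝ}

lemma integrableOn_mul_sqrt_pow (hm : Measurable φ) (h0 : ∀ x, 0 ≤ φ x) (hM : ∀ x, φ x ≤ M)
    {r : ℝ} (hr : 0 < r) (n : ℕ) :
    IntegrableOn (fun x => φ x * √(x ^ 2 - r) ^ n) (Ioc 0 1) := by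
  refine Integrable.mono' (g := fun _ => M) (by simp)
    (Measurable.aestronglyMeasurable (by fun_prop)) ?_
  refine (ae_restrict_iff' measurableSet_Ioc).2 (Eventually.of_forall fun x hx => ?_)
  have hs := sqrt_sq_sub_le_one hx hr
  have := h0 x
  rw [Real.norm_of_nonneg (by positivity)]
  calc φ x * √(x ^ 2 - r) ^ n ≤ M * 1 :=
        mul_le_mul (hM x) (pow_le_one₀ (Real.sqrt_nonneg _) hs) (by positivity)
          ((h0 x).trans (hM x))
    _ = M := mul_one M

lemma integrableOn_mul_sqrt (hm : Measurable φ) (h0 : ∀ x, 0 ≤ φ x) (hM : ∀ x, φ x ≤ M)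
    {r : ℝ} (hr : 0 < r) : IntegrableOn (fun x => φ x * √(x ^ 2 - r)) (Ioc 0 1) := by
  simpa using integrableOn_mul_sqrt_pow hm h0 hM hr 1

lemma integrableOn_mul_inv_sqrt (hm : Measurable φ) (h0 : ∀ x, 0 ≤ φ x) (hM : ∀ x, φ x ≤ M)
    {r : ℝ} (hr : 0 < r) : IntegrableOn (fun x => φ x * (√(x ^ 2 - r))⁻¹) (Ioc 0 1) := by
  refine Integrable.mono' ((integrableOn_inv_sqrt_sq_sub hr 1).const_mul M)
    (Measurable.aestronglyMeasurable (by fun_prop)) (Eventually.of_forall fun x => ?_)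
  have := h0 x
  rw [Real.norm_of_nonneg (by positivity)]
  gcongr
  exact hM x

lemma hasDerivAt_sqrtMoment (hm : Measurable φ) (h0 : ∀ x, 0 ≤ φ x) (hM : ∀ x, φ x ≤ M)
    {r : ℝ} (hr : 0 < r) :
    HasDerivAt (sqrtMoment φ) (-(1 / 2) * invSqrtMoment φ r) r := by
  have key := hasFDerivAt_integral_of_dominated_loc_of_lip' (𝕜 := ℝ)
    (μ := volume.restrict (Ioc (0:ℝ) 1)) (F := fun r x => φ x * √(x ^ 2 - r)) (x₀ := r)
    (bound := fun x => M * (√|x ^ 2 - r|)⁻¹) (s := univ)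
    (F' := fun x => ContinuousLinearMap.toSpanSingleton ℝ
      (φ x * (-(1 / 2) * (√(x ^ 2 - r))⁻¹))) univ_mem
    (fun x _ => Measurable.aestronglyMeasurable (by fun_prop))
    (integrableOn_mul_sqrt hm h0 hM hr)
    ((ContinuousLinearMap.toSpanSingletonCLE (𝕜 := ℝ) (E := ℝ)).continuous.comp_aestronglyMeasurable
      (Measurable.aestronglyMeasurable (by fun_prop))) ?_ ((integrableOn_inv_sqrt_abs_sq_sub hr 1).const_mul M) ?_
  · refine key.2.hasDerivAt.congr_deriv ?_
    rw [ContinuousLinearMap.integral_apply key.1, invSqrtMoment, ← integral_const_mul]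
    congr 1; ext x
    rw [ContinuousLinearMap.toSpanSingleton_apply, one_smul]; ring
  · filter_upwards [ae_sq_ne hr] with x hx t _
    rw [← mul_sub, norm_mul, Real.norm_of_nonneg (h0 x), mul_assoc]
    refine mul_le_mul (hM x) ?_ (norm_nonneg _) ((h0 x).trans (hM x))
    have := abs_sqrt_sub_sqrt_le (x ^ 2 - t) hx
    rw [sub_sub_sub_cancel_left, abs_sub_comm r t] at this
    rw [Real.norm_eq_abs, Real.norm_eq_abs]
    linarith
  · filter_upwards [ae_sq_ne hr] with x hx
    refine HasDerivAt.hasFDerivAt ?_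
    have h1 : HasDerivAt (fun t : ℝ => x ^ 2 - t) (-1) r := by
      simpa using (hasDerivAt_id r).const_sub (x ^ 2)
    have h2 := (((Real.hasDerivAt_sqrt hx).comp r h1).const_mul (φ x))
    refine h2.congr_deriv ?_
    rw [one_div, mul_inv]; ring

lemma hasDerivAt_sqrt_cube (v : ℝ) : HasDerivAt (fun v : ℝ => √v ^ 3) (3 / 2 * √v) v := by
  refine hasDerivAt_of_hasDerivAt_of_ne' (f := fun v : ℝ => √v ^ 3)
    (g := fun v : ℝ => 3 / 2 * √v) (x := (0:ℝ)) (fun y hy => ?_)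
    (Continuous.continuousAt (by fun_prop)) (Continuous.continuousAt (by fun_prop)) v
  refine ((Real.hasDerivAt_sqrt hy).pow 3).congr_deriv ?_
  rcases lt_or_gt_of_ne hy with hy | hy
  · simp [Real.sqrt_eq_zero_of_nonpos hy.le]
  · have := Real.sqrt_pos.2 hy
    field_simp
    norm_num
    ring

lemma hasDerivAt_cubeMoment (hm : Measurable φ) (h0 : ∀ x, 0 ≤ φ x) (hM : ∀ x, φ x ≤ M)
    {r : ℝ} (hr : 0 < r) :
    HasDerivAt (cubeMoment φ) (-(3 / 2) * sqrtMoment φ r) r := by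
  have key := hasDerivAt_integral_of_dominated_loc_of_deriv_le (𝕜 := ℝ)
    (μ := volume.restrict (Ioc (0:ℝ) 1)) (F := fun r x => φ x * √(x ^ 2 - r) ^ 3) (x₀ := r)
    (bound := fun x => M * (3 / 2)) (s := Ioi 0)
    (F' := fun r x => φ x * (-(3 / 2) * √(x ^ 2 - r))) (Ioi_mem_nhds hr)
    (Eventually.of_forall fun x => Measurable.aestronglyMeasurable (by fun_prop))
    (integrableOn_mul_sqrt_pow hm h0 hM hr 3)
    (Measurable.aestronglyMeasurable (by fun_prop)) ?_ (integrable_const _) ?_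
  · refine key.2.congr_deriv ?_
    rw [sqrtMoment, ← integral_const_mul]
    congr 1; ext x; ring
  · refine (ae_restrict_iff' measurableSet_Ioc).2 (Eventually.of_forall fun x hx t ht => ?_)
    have hs := sqrt_sq_sub_le_one hx ht
    rw [norm_mul, norm_mul, Real.norm_of_nonneg (h0 x), Real.norm_of_nonneg (Real.sqrt_nonneg _)]
    refine mul_le_mul (hM x) ?_ (by positivity) ((h0 x).trans (hM x))
    rw [Real.norm_eq_abs, abs_neg, abs_of_pos (by norm_num)]
    linarith
  · refine Eventually.of_forall fun x t _ => ?_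
    have h1 : HasDerivAt (fun t : ℝ => x ^ 2 - t) (-1) t := by
      simpa using (hasDerivAt_id t).const_sub (x ^ 2)
    have h2 := (((hasDerivAt_sqrt_cube _).comp t h1).const_mul (φ x))
    refine h2.congr_deriv ?_
    ring

/-- The full mass of `(x² - r)₊^{-1/2}` on `(0,1]` depends continuously on `r > 0`. -/
lemma continuousOn_integral_inv_sqrt :
    ContinuousOn (fun r : ℝ => ∫ x in Ioc (0:ℝ) 1, (√(x ^ 2 - r))⁻¹) (Ioi 0) := by
  have hQ : ContinuousOn (fun z : ℝ => ∫ u in (0:ℝ)..z, (√(u ^ 2 - 1))⁻¹) (Ioi 0) := by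
    intro z hz
    have hz : 0 < z := hz
    have h := intervalIntegral.continuousOn_primitive_interval' (a := 0)
      ((intervalIntegrable_iff_integrableOn_Ioc_of_le (by linarith : (0:ℝ) ≤ z + 1)).2
        (integrableOn_inv_sqrt_sq_sub one_pos (z + 1))) (by simp)
    rw [uIcc_of_le (by linarith)] at h
    exact (h.continuousAt (Icc_mem_nhds hz (by linarith))).continuousWithinAt
  have h2 : ContinuousOn (fun r : ℝ => (√r)⁻¹) (Ioi 0) := by
    refine ContinuousOn.inv₀ (by fun_prop) fun x hx => (Real.sqrt_pos.2 hx).ne'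
  refine (hQ.comp h2 fun x hx => inv_pos.2 (Real.sqrt_pos.2 hx)).congr fun r hr => ?_
  have hr : 0 < r := hr
  have hs := Real.sqrt_pos.2 hr
  simp only [Function.comp]
  rw [← intervalIntegral.integral_of_le zero_le_one]
  have := intervalIntegral.integral_comp_mul_left (a := 0) (b := 1)
    (fun u : ℝ => (√(u ^ 2 - 1))⁻¹) (inv_pos.2 hs).ne'
  rw [inv_inv, mul_zero, mul_one, smul_eq_mul] at this
  have h3 : (∫ u in (0:ℝ)..(√r)⁻¹, (√(u ^ 2 - 1))⁻¹)
      = (√r)⁻¹ * ∫ x in (0:ℝ)..1, (√(((√r)⁻¹ * x) ^ 2 - 1))⁻¹ := by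
    rw [this, ← mul_assoc, inv_mul_cancel₀ hs.ne', one_mul]
  rw [h3, ← intervalIntegral.integral_const_mul]
  congr 1; ext x
  have e : x ^ 2 - r = r * (((√r)⁻¹ * x) ^ 2 - 1) := by
    rw [mul_pow, inv_pow, Real.sq_sqrt hr.le]; field_simp
  rw [e, Real.sqrt_mul hr.le, mul_inv]

lemma continuousOn_invSqrtMoment (hm : Measurable φ) (h0 : ∀ x, 0 ≤ φ x) (hM : ∀ x, φ x ≤ M) :
    ContinuousOn (invSqrtMoment φ) (Ioi 0) := by
  intro r hr
  have hr : 0 < r := hr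
  refine ContinuousAt.continuousWithinAt ?_
  set K : ℝ → ℝ → ℝ := fun t x => (√(x ^ 2 - t))⁻¹ with hK
  have hK0 : ∀ t x, 0 ≤ K t x := fun t x => by positivity
  have hKi : ∀ t, 0 < t → Integrable (K t) (volume.restrict (Ioc (0:ℝ) 1)) := fun t ht =>
    integrableOn_inv_sqrt_sq_sub ht 1
  have hI : Tendsto (fun t => ∫ x in Ioc (0:ℝ) 1, K t x) (𝓝 r)
      (𝓝 (∫ x in Ioc (0:ℝ) 1, K r x)) :=
    continuousOn_integral_inv_sqrt.continuousAt (Ioi_mem_nhds hr)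
  have hJ : Tendsto (fun t => ∫ x in Ioc (0:ℝ) 1, max (K r x - K t x) 0) (𝓝 r)
      (𝓝 (∫ x in Ioc (0:ℝ) 1, (0:ℝ))) := by
    refine tendsto_integral_filter_of_dominated_convergence (K r)
      (Eventually.of_forall fun t => Measurable.aestronglyMeasurable (by fun_prop))
      (Eventually.of_forall fun t => Eventually.of_forall fun x => ?_) (hKi r hr) ?_
    · rw [Real.norm_of_nonneg (le_max_right _ _)]
      exact max_le (by linarith [hK0 t x]) (hK0 r x)
    · filter_upwards [ae_sq_ne hr] with x hx
      have hc : ContinuousAt (fun t => max (K r x - K t x) 0) r := by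
        refine ContinuousAt.sup (continuousAt_const.sub ?_) continuousAt_const
        rcases lt_or_gt_of_ne hx with hx | hx
        · refine (continuousAt_const (y := (0:ℝ))).congr ?_
          filter_upwards [lt_mem_nhds (show x ^ 2 < r by linarith)] with t ht
          simp [hK, Real.sqrt_eq_zero_of_nonpos (show x ^ 2 - t ≤ 0 by linarith)]
        · refine ContinuousAt.inv₀ (by fun_prop) (Real.sqrt_pos.2 hx).ne'
      simpa [ContinuousAt] using hc
  have hB : Tendsto (fun t => M * ((∫ x in Ioc (0:ℝ) 1, K t x) - (∫ x in Ioc (0:ℝ) 1, K r x)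
      + 2 * ∫ x in Ioc (0:ℝ) 1, max (K r x - K t x) 0)) (𝓝 r) (𝓝 0) := by
    have := ((hI.sub_const (∫ x in Ioc (0:ℝ) 1, K r x)).add (hJ.const_mul 2)).const_mul M
    simpa using this
  rw [ContinuousAt, tendsto_iff_norm_sub_tendsto_zero]
  refine squeeze_zero' (Eventually.of_forall fun t => norm_nonneg _) ?_ hB
  filter_upwards [lt_mem_nhds hr] with t ht
  have hmax : Integrable (fun x => max (K r x - K t x) 0) (volume.restrict (Ioc (0:ℝ) 1)) :=
    ((hKi r hr).sub (hKi t ht)).sup (integrable_zero _ _ _)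
  rw [invSqrtMoment, invSqrtMoment, ← integral_sub (integrableOn_mul_inv_sqrt hm h0 hM ht)
    (integrableOn_mul_inv_sqrt hm h0 hM hr), ← integral_sub (hKi t ht) (hKi r hr),
    ← integral_const_mul, ← integral_add (f := fun x => K t x - K r x) ((hKi t ht).sub (hKi r hr)) (hmax.const_mul 2),
    ← integral_const_mul]
  refine norm_integral_le_of_norm_le
    ((((hKi t ht).sub (hKi r hr)).add (hmax.const_mul 2)).const_mul M)
    (Eventually.of_forall fun x => ?_)
  rw [← mul_sub, norm_mul, Real.norm_of_nonneg (h0 x)]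
  refine mul_le_mul (hM x) ?_ (norm_nonneg _) ((h0 x).trans (hM x))
  change |K t x - K r x| ≤ K t x - K r x + 2 * max (K r x - K t x) 0
  rcases le_total (K t x) (K r x) with h | h
  · rw [abs_of_nonpos (by linarith), max_eq_left (by linarith)]; linarith
  · rw [abs_of_nonneg (by linarith), max_eq_right (by linarith)]; linarith

end Moments

section EquationOfState

variable {g h L : ℝ → ℝ} {A B : ℝ}

lemma contDiff_one_of_hasDerivAt {f f' : ℝ → ℝ} (hf : ∀ x, HasDerivAt f (f' x) x)
    (hf' : Continuous f') : ContDiff ℝ 1 f := by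
  rw [contDiff_one_iff_deriv, show deriv f = f' from funext fun x => (hf x).deriv]
  exact ⟨fun x => (hf x).differentiableAt, hf'⟩

lemma strictMonoOn_Ici_of_hasDerivAt {f f' : ℝ → ℝ} (hf : ∀ x, HasDerivAt f (f' x) x)
    (hpos : ∀ x, 0 < x → 0 < f' x) : StrictMonoOn f (Ici 0) := by
  refine strictMonoOn_of_deriv_pos (convex_Ici 0)
    (fun x _ => (hf x).continuousAt.continuousWithinAt) fun x hx => ?_
  rw [interior_Ici] at hx
  rw [(hf x).deriv]
  exact hpos x hx

lemma bijOn_Ici_of_strictMonoOn {f : ℝ → ℝ} (hc : Continuous f) (hf : StrictMonoOn f (Ici 0))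
    (h0 : f 0 = 0) (ht : Tendsto f atTop atTop) : BijOn f (Ici 0) (Ici 0) := by
  refine ⟨fun x hx => ?_, hf.injOn, ?_⟩
  · have := hf.monotoneOn (mem_Ici.2 le_rfl) hx hx
    rwa [h0] at this
  · have := intermediate_value_Ici hc.continuousOn ht (a := 0)
    rwa [h0] at this

/-- A quadratic bound on `g - 3h` by `h`, from the differential equations on `[0,1]` and from the
growth rates on `[1,∞)`. -/
lemma exists_sq_sub_le (hh : ∀ y, HasDerivAt h (g y + h y) y)
    (hg : ∀ y, HasDerivAt g (5 * g y - 3 * h y + L y) y) (hL : Continuous L)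
    (hz : ∀ y, y ≤ 0 → g y = 0 ∧ h y = 0) (hpos : ∀ y, 0 < y → 0 < h y)
    (hgh : ∀ y, 0 < y → 3 * h y < g y) (hgmono : StrictMonoOn g (Ici 0))
    (hA : ∀ y, 1 ≤ y → g y - 3 * h y ≤ A * Real.exp (2 * y)) (hB0 : 0 < B)
    (hB : ∀ y, 1 ≤ y → B * Real.exp (4 * y) ≤ h y) :
    ∃ C, 0 < C ∧ ∀ y, 0 ≤ y → (g y - 3 * h y) ^ 2 ≤ C * h y := by
  obtain ⟨K, hK⟩ := (isCompact_Icc (a := (0:ℝ)) (b := 1)).bddAbove_image hL.continuousOn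
  have hK : ∀ y ∈ Icc (0:ℝ) 1, L y ≤ K := fun y hy => hK (mem_image_of_mem L hy)
  set C := |2 * (2 * g 1 + K)|
  have hF : ∀ y, HasDerivAt (fun y => C * h y - (g y - 3 * h y) ^ 2)
      (C * (g y + h y) - 2 * (g y - 3 * h y) * (2 * g y - 6 * h y + L y)) y := fun y => by
    refine (((hh y).const_mul C).sub (((hg y).sub ((hh y).const_mul 3)).pow 2)).congr_deriv ?_
    push_cast [Pi.sub_apply]
    ring
  have hmono : MonotoneOn (fun y => C * h y - (g y - 3 * h y) ^ 2) (Icc 0 1) := by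
    refine monotoneOn_of_deriv_nonneg (convex_Icc 0 1)
      (fun y _ => (hF y).continuousAt.continuousWithinAt)
      (fun y _ => (hF y).differentiableAt.differentiableWithinAt) fun y hy => ?_
    rw [interior_Icc] at hy
    rw [(hF y).deriv, sub_nonneg]
    have h1 := hpos y hy.1
    have h2 := hgh y hy.1
    have h3 := hK y ⟨hy.1.le, hy.2.le⟩
    have h4 : g y < g 1 := hgmono hy.1.le (mem_Ici.2 zero_le_one) hy.2
    have h5 : 2 * (2 * g y - 6 * h y + L y) ≤ C := by
      linarith [le_abs_self (2 * (2 * g 1 + K))]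
    have hd : 0 < g y - 3 * h y := by linarith
    calc 2 * (g y - 3 * h y) * (2 * g y - 6 * h y + L y)
        = (g y - 3 * h y) * (2 * (2 * g y - 6 * h y + L y)) := by ring
      _ ≤ (g y - 3 * h y) * C := mul_le_mul_of_nonneg_left h5 hd.le
      _ ≤ (g y + h y) * C := mul_le_mul_of_nonneg_right (by linarith) (abs_nonneg _)
      _ = C * (g y + h y) := mul_comm _ _
  refine ⟨C + A ^ 2 / B + 1, by positivity, fun y hy => ?_⟩
  have hhy : 0 ≤ h y := by
    rcases hy.eq_or_lt with rfl | hy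
    · rw [(hz 0 le_rfl).2]
    · exact (hpos y hy).le
  have hAB : 0 ≤ A ^ 2 / B := by positivity
  rcases le_total y 1 with hy1 | hy1
  · have := hmono ⟨le_rfl, zero_le_one⟩ ⟨hy, hy1⟩ hy
    simp only [hz 0 le_rfl] at this
    nlinarith
  · have h1 := hA y hy1
    have h2 := hB y hy1
    have h3 := hgh y (by linarith)
    have e : Real.exp (4 * y) = Real.exp (2 * y) ^ 2 := by rw [← Real.exp_nat_mul]; ring_nf
    have h4 : (g y - 3 * h y) ^ 2 ≤ (A * Real.exp (2 * y)) ^ 2 :=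
      pow_le_pow_left₀ (by linarith) h1 2
    have h5 : (A * Real.exp (2 * y)) ^ 2 = A ^ 2 / B * (B * Real.exp (4 * y)) := by
      rw [e]; field_simp
    have h6 : A ^ 2 / B * (B * Real.exp (4 * y)) ≤ A ^ 2 / B * h y :=
      mul_le_mul_of_nonneg_left h2 hAB
    have h7 : 0 ≤ C * h y := mul_nonneg (abs_nonneg _) hhy
    linarith [add_mul (C + A ^ 2 / B) 1 (h y), add_mul C (A ^ 2 / B) (h y)]

/-- The equation of state `P = h ∘ g⁻¹` of a solution of `h' = g + h`, `g' = 5g - 3h + L`. -/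
theorem exists_equationOfState (hh : ∀ y, HasDerivAt h (g y + h y) y)
    (hg : ∀ y, HasDerivAt g (5 * g y - 3 * h y + L y) y) (hL : Continuous L)
    (hz : ∀ y, y ≤ 0 → g y = 0 ∧ h y = 0) (hpos : ∀ y, 0 < y → 0 < h y)
    (hgh : ∀ y, 0 < y → 3 * h y < g y) (hLpos : ∀ y, 0 < y → 0 < L y)
    (hgL : ∀ y, 0 < y → g y ≤ Real.exp (4 * y) * (1 - Real.exp (-2 * y)) * L y)
    (hA : ∀ y, 1 ≤ y → g y - 3 * h y ≤ A * Real.exp (2 * y)) (hB0 : 0 < B)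
    (hB : ∀ y, 1 ≤ y → B * Real.exp (4 * y) ≤ h y) :
    ContDiff ℝ 1 g ∧ ContDiff ℝ 1 h ∧ (∀ y : ℝ, y ≤ 0 → g y = 0 ∧ h y = 0) ∧
    StrictMonoOn g (Ici 0) ∧ StrictMonoOn h (Ici 0) ∧
    Tendsto g atTop atTop ∧ Tendsto h atTop atTop ∧ BijOn g (Ici 0) (Ici 0) ∧
    ∃ P : ℝ → ℝ,
      (∀ y : ℝ, 0 ≤ y → P (g y) = h y) ∧ ContDiffOn ℝ 1 P (Ici 0) ∧ P 0 = 0 ∧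
      (∀ ρ : ℝ, 0 < ρ → 0 < deriv P ρ ∧ deriv P ρ < 1 / 3) ∧
      ∃ C : ℝ, 0 < C ∧
        (∀ ρ : ℝ, 0 ≤ ρ → |P ρ - ρ / 3| ≤ C * √ρ) ∧
        BijOn P (Ici 0) (Ici 0) ∧
        (∀ q : ℝ, 0 < q → ∀ ρ : ℝ, 0 ≤ ρ → P ρ = q → |ρ - 3 * q| ≤ C * √q) := by
  have hgc : Continuous g := continuous_iff_continuousAt.2 fun y => (hg y).continuousAt
  have hhc : Continuous h := continuous_iff_continuousAt.2 fun y => (hh y).continuousAt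
  have hg0 := (hz 0 le_rfl).1
  have hh0 := (hz 0 le_rfl).2
  have hden : ∀ y, 0 < y → 0 < 5 * g y - 3 * h y + L y := fun y hy => by
    linarith [hpos y hy, hgh y hy, hLpos y hy]
  have hgmono : StrictMonoOn g (Ici 0) := strictMonoOn_Ici_of_hasDerivAt hg hden
  have hhmono : StrictMonoOn h (Ici 0) := strictMonoOn_Ici_of_hasDerivAt hh fun y hy => by
    linarith [hpos y hy, hgh y hy]
  have hht : Tendsto h atTop atTop := by
    refine tendsto_atTop_mono' _ ((eventually_ge_atTop 1).mono hB) ?_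
    exact (Real.tendsto_exp_atTop.comp
      (tendsto_id.const_mul_atTop (by norm_num : (0:ℝ) < 4))).const_mul_atTop hB0
  have hgt : Tendsto g atTop atTop := by
    refine tendsto_atTop_mono' _ ((eventually_gt_atTop 0).mono fun y hy => ?_) hht
    linarith [hpos y hy, hgh y hy]
  have hgbij := bijOn_Ici_of_strictMonoOn hgc hgmono hg0 hgt
  have hhbij := bijOn_Ici_of_strictMonoOn hhc hhmono hh0 hht
  refine ⟨contDiff_one_of_hasDerivAt hg (by fun_prop), contDiff_one_of_hasDerivAt hh (by fun_prop),
    hz, hgmono, hhmono, hgt, hht, hgbij, ?_⟩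
  -- extend `g` by the identity to an order isomorphism of the line
  have hGmono : StrictMono fun y => g y + min y 0 := by
    intro x y hxy
    simp only
    rcases le_total 0 x with hx | hx
    · rw [min_eq_right hx, min_eq_right (hx.trans hxy.le), add_zero, add_zero]
      exact hgmono hx (hx.trans hxy.le) hxy
    · rw [min_eq_left hx, (hz x hx).1, zero_add]
      rcases le_or_gt y 0 with hy | hy
      · rw [min_eq_left hy, (hz y hy).1, zero_add]; exact hxy
      · rw [min_eq_right hy.le]
        linarith [hpos y hy, hgh y hy]
  have hGsurj : Function.Surjective fun y => g y + min y 0 := by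
    refine Continuous.surjective (by fun_prop) ?_ ?_
    · refine hgt.congr' ((eventually_ge_atTop 0).mono fun y hy => ?_)
      simp only [min_eq_right hy, add_zero]
    · refine tendsto_id.congr' ((eventually_le_atBot 0).mono fun y hy => ?_)
      simp only [min_eq_left hy, (hz y hy).1, zero_add, id]
  set e : ℝ ≃o ℝ := StrictMono.orderIsoOfSurjective _ hGmono hGsurj
  have he : ∀ y, e y = g y + min y 0 := fun y => rfl
  have he0 : e.symm 0 = 0 := by rw [OrderIso.symm_apply_eq, he, hg0]; simp
  have heg : ∀ y, 0 ≤ y → e.symm (g y) = y := fun y hy => by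
    rw [OrderIso.symm_apply_eq, he, min_eq_right hy, add_zero]
  have hsymm_pos : ∀ ρ, 0 < ρ → 0 < e.symm ρ := fun ρ hρ => by
    rw [← he0]; exact e.symm.strictMono hρ
  have hsymm_nonneg : ∀ ρ, 0 ≤ ρ → 0 ≤ e.symm ρ := fun ρ hρ => by
    rw [← he0]; exact e.symm.monotone hρ
  have hge : ∀ ρ, 0 ≤ ρ → g (e.symm ρ) = ρ := fun ρ hρ => by
    have := he (e.symm ρ)
    rwa [min_eq_right (hsymm_nonneg ρ hρ), add_zero, OrderIso.apply_symm_apply, eq_comm] at this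
  have hec : Continuous e.symm := e.symm.continuous
  set q : ℝ → ℝ := fun y => (g y + h y) / (5 * g y - 3 * h y + L y) with hq
  have hq0 : ∀ y, y ≤ 0 → q y = 0 := fun y hy => by simp [hq, hz y hy]
  have hqc : Continuous q := by
    rw [continuous_iff_continuousAt]
    intro y
    rcases lt_trichotomy y 0 with hy | rfl | hy
    · refine (continuousAt_const (y := (0:ℝ))).congr ?_
      filter_upwards [gt_mem_nhds hy] with t ht
      rw [hq0 t ht.le]
    · rw [ContinuousAt, hq0 0 le_rfl]
      have hb : Tendsto (fun y : ℝ => 2 * |Real.exp (4 * y) * (1 - Real.exp (-2 * y))|) (𝓝 0)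
          (𝓝 0) := by
        have : Continuous fun y : ℝ => 2 * |Real.exp (4 * y) * (1 - Real.exp (-2 * y))| := by
          fun_prop
        simpa using this.tendsto 0
      refine squeeze_zero_norm (fun y => ?_) hb
      rcases le_or_gt y 0 with hy | hy
      · rw [hq0 y hy, norm_zero]; positivity
      · have h1 := hpos y hy
        have h2 := hgh y hy
        have h3 := hLpos y hy
        have h4 := hgL y hy
        have h5 := le_abs_self (Real.exp (4 * y) * (1 - Real.exp (-2 * y)))
        have h6 := abs_nonneg (Real.exp (4 * y) * (1 - Real.exp (-2 * y)))
        rw [Real.norm_of_nonneg (div_nonneg (by linarith) (hden y hy).le),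
          div_le_iff₀ (hden y hy)]
        set E := Real.exp (4 * y) * (1 - Real.exp (-2 * y))
        have h7 : E * L y ≤ |E| * L y := mul_le_mul_of_nonneg_right h5 h3.le
        have h8 : |E| * L y ≤ |E| * (5 * g y - 3 * h y + L y) :=
          mul_le_mul_of_nonneg_left (by linarith) h6
        linarith
    · exact ContinuousAt.div (by fun_prop) (by fun_prop) (hden y hy).ne'
  have hP : ∀ ρ, HasDerivAt (fun ρ => h (e.symm ρ)) (q (e.symm ρ)) ρ := by
    refine hasDerivAt_of_hasDerivAt_of_ne' (f := fun ρ => h (e.symm ρ))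
      (g := fun ρ => q (e.symm ρ)) (x := 0) (fun ρ hρ => ?_)
      (Continuous.continuousAt (by fun_prop)) (Continuous.continuousAt (by fun_prop))
    rcases lt_or_gt_of_ne hρ with hρ | hρ
    · have hneg : ∀ t, t < 0 → e.symm t ≤ 0 := fun t ht => by
        rw [← he0]; exact e.symm.monotone ht.le
      rw [hq0 _ (hneg ρ hρ)]
      refine (hasDerivAt_const ρ (0:ℝ)).congr_of_eventuallyEq ?_
      filter_upwards [gt_mem_nhds hρ] with t ht
      exact (hz _ (hneg t ht)).2
    · have hinv : HasDerivAt e.symm (5 * g (e.symm ρ) - 3 * h (e.symm ρ) + L (e.symm ρ))⁻¹ ρ :=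
        HasDerivAt.of_local_left_inverse hec.continuousAt (hg (e.symm ρ))
          (hden _ (hsymm_pos ρ hρ)).ne' ((lt_mem_nhds hρ).mono fun t ht => hge t ht.le)
      exact (hh (e.symm ρ)).comp ρ hinv
  obtain ⟨C, hC0, hC⟩ := exists_sq_sub_le hh hg hL hz hpos hgh hgmono hA hB0 hB
  have hest : ∀ y, 0 ≤ y → 0 ≤ h y ∧ 3 * h y ≤ g y ∧ g y - 3 * h y ≤ √C * √(h y) := fun y hy => by
    refine ⟨?_, ?_, ?_⟩
    · rcases hy.eq_or_lt with rfl | hy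
      · exact hh0.ge
      · exact (hpos y hy).le
    · rcases hy.eq_or_lt with rfl | hy
      · rw [hh0, hg0, mul_zero]
      · exact (hgh y hy).le
    · rw [← Real.sqrt_mul hC0.le]
      exact Real.le_sqrt_of_sq_le (hC y hy)
  refine ⟨fun ρ => h (e.symm ρ), fun y hy => ?_,
    (contDiff_one_of_hasDerivAt hP (by fun_prop)).contDiffOn, ?_, fun ρ hρ => ?_,
    √C, Real.sqrt_pos.2 hC0, fun ρ hρ => ?_, ⟨fun ρ hρ => ?_, ?_, ?_⟩, ?_⟩
  · simp only [heg y hy]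
  · simp only [he0, hh0]
  · rw [(hP ρ).deriv]
    have hy := hsymm_pos ρ hρ
    have h1 := hpos _ hy
    have h2 := hgh _ hy
    have h3 := hLpos _ hy
    refine ⟨div_pos (by linarith) (hden _ hy), ?_⟩
    rw [div_lt_iff₀ (hden _ hy)]
    linarith
  · obtain ⟨h1, h2, h3⟩ := hest _ (hsymm_nonneg ρ hρ)
    rw [hge ρ hρ] at h2 h3
    have h4 : √C * √(h (e.symm ρ)) ≤ √C * √ρ := by
      gcongr
      linarith
    rw [abs_of_nonpos (by linarith)]
    have h5 : 0 ≤ √C * √ρ := by positivity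
    linarith
  · exact (hest _ (hsymm_nonneg ρ hρ)).1
  · intro a ha b hb hab
    exact e.symm.injective (hhmono.injOn (hsymm_nonneg a ha) (hsymm_nonneg b hb) hab)
  · intro p hp
    obtain ⟨y, hy, rfl⟩ := hhbij.surjOn hp
    exact ⟨g y, hgbij.mapsTo hy, by simp only [heg y hy]⟩
  · rintro p _ ρ hρ rfl
    obtain ⟨h1, h2, h3⟩ := hest _ (hsymm_nonneg ρ hρ)
    rw [hge ρ hρ] at h2 h3
    rw [abs_of_nonneg (by linarith)]
    exact h3

end EquationOfState

section Ansatz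

lemma integral_weight_eq_zero (φ K : ℝ → ℝ) {r : ℝ} (hr : 1 ≤ r) (hK : K 0 = 0) :
    ∫ x in Ioc (0:ℝ) 1, φ x * K (√(x ^ 2 - r)) = 0 := by
  refine setIntegral_eq_zero_of_forall_eq_zero fun x hx => ?_
  rw [Real.sqrt_eq_zero_of_nonpos (by nlinarith [hx.1, hx.2]), hK, mul_zero]

lemma integral_weight_pos {φ K : ℝ → ℝ} {r η₀ : ℝ} (hr : r < 1) (hη₀ : 0 < η₀)
    (h0 : ∀ x, 0 ≤ φ x) (hφ : ∀ x, 1 - η₀ < x → 0 < x → x < 1 → 0 < φ x)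
    (hK : ∀ v, 0 ≤ v → 0 ≤ K v) (hKpos : ∀ v, 0 < v → 0 < K v)
    (hint : IntegrableOn (fun x => φ x * K (√(x ^ 2 - r))) (Ioc 0 1)) :
    0 < ∫ x in Ioc (0:ℝ) 1, φ x * K (√(x ^ 2 - r)) := by
  rw [setIntegral_pos_iff_support_of_nonneg_ae
    (Eventually.of_forall fun x => mul_nonneg (h0 x) (hK _ (Real.sqrt_nonneg _))) hint]
  have hlt : max (max (1 - η₀) 0) (√r) < 1 :=
    max_lt (max_lt (by linarith) one_pos) ((Real.sqrt_lt' one_pos).2 (by simpa using hr))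
  refine lt_of_lt_of_le ?_ (measure_mono
    (s := Ioo (max (max (1 - η₀) 0) (√r)) 1) fun x hx => ⟨?_, ?_, hx.2.le⟩)
  · simpa using hlt
  · have h1 := max_lt_iff.1 hx.1
    have h2 := max_lt_iff.1 h1.1
    refine (mul_pos (hφ x h2.1 h2.2 hx.2) (hKpos _ (Real.sqrt_pos.2 ?_))).ne'
    linarith [(Real.sqrt_lt' h2.2).1 h1.2]
  · exact (max_lt_iff.1 (max_lt_iff.1 hx.1).1).2

lemma cubeMoment_add_le {φ : ℝ → ℝ} {M : ℝ} (hm : Measurable φ) (h0 : ∀ x, 0 ≤ φ x)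
    (hM : ∀ x, φ x ≤ M) {r : ℝ} (hr : 0 < r) :
    cubeMoment φ r + r * sqrtMoment φ r ≤ (1 - r) * invSqrtMoment φ r := by
  have h1 := integrableOn_mul_sqrt_pow hm h0 hM hr 3
  have h2 := integrableOn_mul_sqrt hm h0 hM hr
  have h3 := integrableOn_mul_inv_sqrt hm h0 hM hr
  rw [cubeMoment, sqrtMoment, invSqrtMoment, ← integral_const_mul, ← integral_const_mul,
    ← integral_add h1 (h2.const_mul r)]
  refine setIntegral_mono_on (h1.add (h2.const_mul r)) (h3.const_mul _) measurableSet_Ioc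
    fun x hx => ?_
  rcases le_or_gt (x ^ 2 - r) 0 with hv | hv
  · simp [Real.sqrt_eq_zero_of_nonpos hv]
  · have hs := Real.sqrt_pos.2 hv
    have hsq := Real.sq_sqrt hv.le
    have hx1 : x ^ 2 ≤ 1 := by nlinarith [hx.1, hx.2]
    set s := √(x ^ 2 - r)
    have key : s ^ 3 + r * s ≤ (1 - r) * s⁻¹ := by
      rw [← div_eq_mul_inv, le_div_iff₀ hs]
      have : (s ^ 3 + r * s) * s = (x ^ 2 - r) * x ^ 2 := by rw [← hsq]; nlinarith
      rw [this]
      nlinarith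
    calc φ x * s ^ 3 + r * (φ x * s) = φ x * (s ^ 3 + r * s) := by ring
      _ ≤ φ x * ((1 - r) * s⁻¹) := mul_le_mul_of_nonneg_left key (h0 x)
      _ = (1 - r) * (φ x * s⁻¹) := by ring

lemma sqrtMoment_le {φ : ℝ → ℝ} {M : ℝ} (hm : Measurable φ) (h0 : ∀ x, 0 ≤ φ x)
    (hM : ∀ x, φ x ≤ M) {r : ℝ} (hr : 0 < r) : sqrtMoment φ r ≤ M := by
  have : sqrtMoment φ r ≤ ∫ x in Ioc (0:ℝ) 1, M := by
    refine setIntegral_mono_on (integrableOn_mul_sqrt hm h0 hM hr) (by simp) measurableSet_Ioc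
      fun x hx => ?_
    calc φ x * √(x ^ 2 - r) ≤ M * 1 := mul_le_mul (hM x) (sqrt_sq_sub_le_one hx hr)
          (Real.sqrt_nonneg _) ((h0 x).trans (hM x))
      _ = M := mul_one M
  simpa using this

lemma cubeMoment_anti {φ : ℝ → ℝ} {M : ℝ} (hm : Measurable φ) (h0 : ∀ x, 0 ≤ φ x)
    (hM : ∀ x, φ x ≤ M) {r t : ℝ} (hr : 0 < r) (hrt : r ≤ t) :
    cubeMoment φ t ≤ cubeMoment φ r := by
  refine setIntegral_mono_on (integrableOn_mul_sqrt_pow hm h0 hM (hr.trans_le hrt) 3)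
    (integrableOn_mul_sqrt_pow hm h0 hM hr 3) measurableSet_Ioc fun x _ => ?_
  have := h0 x
  gcongr

/-- The ansatz as a function of `x = 1 - η`, cut off outside `(0,1]`. -/
def reflectedAnsatz (Φ : ℝ → ℝ) : ℝ → ℝ := (Ioc (0:ℝ) 1).indicator fun x => Φ (1 - x)

lemma integral_ansatz_eq (Φ K : ℝ → ℝ) {c : ℝ} (h0 : 0 ≤ c) (h1 : c ≤ 1)
    (hK : ∀ x, 0 < x → x ≤ 1 - c → K x = 0) :
    ∫ η in (0:ℝ)..c, Φ η * K (1 - η) = ∫ x in Ioc (0:ℝ) 1, reflectedAnsatz Φ x * K x := by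
  have e := intervalIntegral.integral_comp_sub_left (a := 0) (b := c)
    (fun x => Φ (1 - x) * K x) 1
  simp only [sub_sub_cancel, sub_zero] at e
  rw [e, intervalIntegral.integral_of_le (by linarith)]
  have hsub : Ioc (1 - c) 1 ⊆ Ioc (0:ℝ) 1 := Ioc_subset_Ioc_left (by linarith)
  rw [← setIntegral_eq_of_subset_of_forall_sdiff_eq_zero measurableSet_Ioc hsub]
  · refine setIntegral_congr_fun measurableSet_Ioc fun x hx => ?_
    have hx' : x ∈ Ioc (0:ℝ) 1 := hx
    simp only [reflectedAnsatz, indicator_of_mem hx']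
  · intro x hx
    rw [hK x hx.1.1 (not_lt.1 fun h => hx.2 ⟨h, hx.1.2⟩), mul_zero]

lemma exp_neg_two_mul (y : ℝ) : Real.exp (-2 * y) = Real.exp (-y) ^ 2 := by
  rw [← Real.exp_nat_mul]; ring_nf

lemma sqrt_sq_sub_exp_eq_zero {x y : ℝ} (hx : 0 < x) (hxy : x ≤ 1 - (1 - Real.exp (-y))) :
    √(x ^ 2 - Real.exp (-2 * y)) = 0 := by
  refine Real.sqrt_eq_zero_of_nonpos ?_
  rw [exp_neg_two_mul, sub_nonpos]
  exact pow_le_pow_left₀ hx.le (by linarith) 2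

lemma exp_four_mul (y : ℝ) : Real.exp (4 * y) * Real.exp (-2 * y) = Real.exp (2 * y) := by
  rw [← Real.exp_add]; ring_nf

lemma hfun_eq (Φ : ℝ → ℝ) (y : ℝ) :
    hfun Φ y = 4 * Real.pi / 3 * Real.exp (4 * y) *
      cubeMoment (reflectedAnsatz Φ) (Real.exp (-2 * y)) := by
  rcases le_or_gt y 0 with hy | hy
  · rw [hfun, if_pos hy, cubeMoment, integral_weight_eq_zero _ (fun v => v ^ 3)
      (Real.one_le_exp (by linarith)) (by simp), mul_zero]
  · have he : Real.exp (-y) ≤ 1 := Real.exp_le_one_iff.2 (by linarith)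
    rw [hfun, if_neg hy.not_ge, cubeMoment]
    congr 1
    refine integral_ansatz_eq Φ (fun x => √(x ^ 2 - Real.exp (-2 * y)) ^ 3) (by linarith)
      (by linarith [Real.exp_pos (-y)]) fun x hx hxy => ?_
    simp only [sqrt_sq_sub_exp_eq_zero hx hxy]
    norm_num

lemma gfun_eq {Φ : ℝ → ℝ} {M : ℝ} (hm : Measurable (reflectedAnsatz Φ))
    (h0 : ∀ x, 0 ≤ reflectedAnsatz Φ x) (hM : ∀ x, reflectedAnsatz Φ x ≤ M) (y : ℝ) :
    gfun Φ y = 3 * hfun Φ y +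
      4 * Real.pi * Real.exp (2 * y) * sqrtMoment (reflectedAnsatz Φ) (Real.exp (-2 * y)) := by
  rcases le_or_gt y 0 with hy | hy
  · rw [gfun, hfun, if_pos hy, if_pos hy, sqrtMoment, integral_weight_eq_zero _ (fun v => v)
      (Real.one_le_exp (by linarith)) rfl]
    ring
  · have he : Real.exp (-y) ≤ 1 := Real.exp_le_one_iff.2 (by linarith)
    have hr := Real.exp_pos (-2 * y)
    have key := integral_ansatz_eq Φ (c := 1 - Real.exp (-y))
      (fun x => x ^ 2 * √(x ^ 2 - Real.exp (-2 * y))) (by linarith)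
      (by linarith [Real.exp_pos (-y)]) fun x hx hxy => by
        simp only [sqrt_sq_sub_exp_eq_zero hx hxy, mul_zero]
    simp only [← mul_assoc] at key
    rw [gfun, if_neg hy.not_ge, key, hfun_eq, ← exp_four_mul]
    have split : (∫ x in Ioc (0:ℝ) 1,
        reflectedAnsatz Φ x * x ^ 2 * √(x ^ 2 - Real.exp (-2 * y))) =
        cubeMoment (reflectedAnsatz Φ) (Real.exp (-2 * y)) +
          Real.exp (-2 * y) * sqrtMoment (reflectedAnsatz Φ) (Real.exp (-2 * y)) := by
      rw [cubeMoment, sqrtMoment, ← integral_const_mul,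
        ← integral_add (integrableOn_mul_sqrt_pow hm h0 hM hr 3)
          ((integrableOn_mul_sqrt hm h0 hM hr).const_mul _)]
      refine integral_congr_ae (Eventually.of_forall fun x => ?_)
      simp only
      rcases le_or_gt (x ^ 2 - Real.exp (-2 * y)) 0 with hv | hv
      · rw [Real.sqrt_eq_zero_of_nonpos hv]
        ring
      · have hsq := Real.sq_sqrt hv.le
        have : x ^ 2 = √(x ^ 2 - Real.exp (-2 * y)) ^ 2 + Real.exp (-2 * y) := by linarith
        linear_combination reflectedAnsatz Φ x * √(x ^ 2 - Real.exp (-2 * y)) * this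
    rw [split]
    ring

end Ansatz

lemma hasDerivAt_exp_const_mul (c y : ℝ) :
    HasDerivAt (fun y => Real.exp (c * y)) (c * Real.exp (c * y)) y := by
  refine ((hasDerivAt_id y).const_mul c).exp.congr_deriv ?_
  simp [mul_comm]

/-- Under assumption (Φ1), the induced `g` and `h` are `C¹`, vanish for
`y ≤ 0`, are strictly increasing on `[0,∞)` and tend to `∞`; `g` restricted to `[0,∞)` is a
bijection onto `[0,∞)`, and the macroscopic equation of state `P = h ∘ g⁻¹` satisfies
`P ∈ C¹([0,∞))`, `P(0) = 0`, `0 < P′ < 1/3` on `(0,∞)`, `|P(ρ) − ρ/3| ≤ C√ρ`, and is a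
bijection of `[0,∞)` whose inverse satisfies `|P⁻¹(q) − 3q| ≤ C√q`. -/
theorem stmt12 (Φ : ℝ → ℝ) (k c₁ c₂ η₀ : ℝ)
    (hk : k ∈ Set.Ioo (-(1/2) : ℝ) (3/2))
    (hc₁ : 0 < c₁) (hc₂ : 0 < c₂) (hη₀ : 0 < η₀)
    (hΦmeas : Measurable Φ)
    (hΦnonneg : ∀ η : ℝ, 0 ≤ Φ η)
    (hΦzero : ∀ η : ℝ, η ≤ 0 → Φ η = 0)
    (hΦloc : ∀ a : ℝ, 0 < a → ∃ M : ℝ, ∀ η ∈ Set.Icc (0:ℝ) a, Φ η ≤ M)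
    (hΦasymp : ∀ η ∈ Set.Ioo (0:ℝ) η₀, c₁ * η ^ k ≤ Φ η ∧ Φ η ≤ c₂ * η ^ k) :
    ContDiff ℝ 1 (gfun Φ) ∧ ContDiff ℝ 1 (hfun Φ) ∧
    (∀ y : ℝ, y ≤ 0 → gfun Φ y = 0 ∧ hfun Φ y = 0) ∧
    StrictMonoOn (gfun Φ) (Set.Ici 0) ∧ StrictMonoOn (hfun Φ) (Set.Ici 0) ∧
    Filter.Tendsto (gfun Φ) Filter.atTop Filter.atTop ∧
    Filter.Tendsto (hfun Φ) Filter.atTop Filter.atTop ∧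
    Set.BijOn (gfun Φ) (Set.Ici 0) (Set.Ici 0) ∧
    ∃ P : ℝ → ℝ,
      (∀ y : ℝ, 0 ≤ y → P (gfun Φ y) = hfun Φ y) ∧
      ContDiffOn ℝ 1 P (Set.Ici 0) ∧ P 0 = 0 ∧
      (∀ ρ : ℝ, 0 < ρ → 0 < deriv P ρ ∧ deriv P ρ < 1 / 3) ∧
      ∃ C : ℝ, 0 < C ∧
        (∀ ρ : ℝ, 0 ≤ ρ → |P ρ - ρ / 3| ≤ C * Real.sqrt ρ) ∧
        Set.BijOn P (Set.Ici 0) (Set.Ici 0) ∧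
        (∀ q : ℝ, 0 < q → ∀ ρ : ℝ, 0 ≤ ρ → P ρ = q → |ρ - 3 * q| ≤ C * Real.sqrt q) := by
  obtain ⟨M, hM⟩ := hΦloc 1 one_pos
  set φ := reflectedAnsatz Φ with hφ
  have hm : Measurable φ :=
    (hΦmeas.comp (measurable_const.sub measurable_id)).indicator measurableSet_Ioc
  have h0 : ∀ x, 0 ≤ φ x := fun x => indicator_nonneg (fun _ _ => hΦnonneg _) x
  have hφM : ∀ x, φ x ≤ M := fun x => by
    have hM0 : 0 ≤ M := (hΦnonneg 0).trans (hM 0 (by simp))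
    refine indicator_le' (fun x hx => hM _ ⟨?_, ?_⟩) (fun _ _ => hM0) x
    · linarith [hx.2]
    · linarith [hx.1]
  have hφpos : ∀ x, 1 - η₀ < x → 0 < x → x < 1 → 0 < φ x := fun x h1 h2 h3 => by
    rw [hφ, reflectedAnsatz, indicator_of_mem (mem_Ioc.2 ⟨h2, h3.le⟩)]
    have h4 : 0 < (1 - x) ^ k := Real.rpow_pos_of_pos (by linarith) k
    have h5 := (hΦasymp (1 - x) ⟨by linarith, by linarith⟩).1
    exact lt_of_lt_of_le (by positivity) h5
  set r : ℝ → ℝ := fun y => Real.exp (-2 * y) with hr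
  have hr0 : ∀ y, 0 < r y := fun y => Real.exp_pos _
  have hr1 : ∀ y, 0 < y → r y < 1 := fun y hy => Real.exp_lt_one_iff.2 (by linarith)
  have hrd : ∀ y, HasDerivAt r (-2 * r y) y := hasDerivAt_exp_const_mul (-2)
  have hrc : Continuous r := by fun_prop
  have hheq : ∀ y, hfun Φ y = 4 * Real.pi / 3 * Real.exp (4 * y) * cubeMoment φ (r y) :=
    hfun_eq Φ
  have hgeq : ∀ y, gfun Φ y = 3 * hfun Φ y + 4 * Real.pi * Real.exp (2 * y) * sqrtMoment φ (r y) :=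
    gfun_eq hm h0 hφM
  have hexp : ∀ y, Real.exp (4 * y) * r y = Real.exp (2 * y) := exp_four_mul
  have hexp' : ∀ y, Real.exp (2 * y) * r y = 1 := fun y => by
    rw [hr, ← Real.exp_add]; simp
  have hpi := Real.pi_pos
  have hNpos : ∀ y, 0 < y → 0 < sqrtMoment φ (r y) := fun y hy =>
    integral_weight_pos (K := fun v => v) (hr1 y hy) hη₀ h0 hφpos (fun _ h => h) (fun _ h => h)
      (integrableOn_mul_sqrt hm h0 hφM (hr0 y))
  have hTpos : ∀ y, 0 < y → 0 < cubeMoment φ (r y) := fun y hy =>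
    integral_weight_pos (K := fun v => v ^ 3) (hr1 y hy) hη₀ h0 hφpos
      (fun _ h => pow_nonneg h 3) (fun _ h => pow_pos h 3)
      (integrableOn_mul_sqrt_pow hm h0 hφM (hr0 y) 3)
  have hLpos : ∀ y, 0 < y → 0 < invSqrtMoment φ (r y) := fun y hy =>
    integral_weight_pos (K := fun v => v⁻¹) (hr1 y hy) hη₀ h0 hφpos
      (fun _ h => inv_nonneg.2 h) (fun _ h => inv_pos.2 h)
      (integrableOn_mul_inv_sqrt hm h0 hφM (hr0 y))
  have hh : ∀ y, HasDerivAt (hfun Φ) (gfun Φ y + hfun Φ y) y := fun y => by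
    rw [show hfun Φ = fun y => 4 * Real.pi / 3 * Real.exp (4 * y) * cubeMoment φ (r y) from
      funext hheq]
    refine (((hasDerivAt_exp_const_mul 4 y).const_mul (4 * Real.pi / 3)).mul
      ((hasDerivAt_cubeMoment hm h0 hφM (hr0 y)).comp y (hrd y))).congr_deriv ?_
    simp only [Function.comp]
    rw [hgeq, hheq]
    linear_combination 4 * Real.pi * sqrtMoment φ (r y) * hexp y
  have hg : ∀ y, HasDerivAt (gfun Φ)
      (5 * gfun Φ y - 3 * hfun Φ y + 4 * Real.pi * invSqrtMoment φ (r y)) y := fun y => by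
    rw [show gfun Φ = fun y => 3 * hfun Φ y + 4 * Real.pi * Real.exp (2 * y) * sqrtMoment φ (r y)
      from funext hgeq]
    refine (((hh y).const_mul 3).add
      (((hasDerivAt_exp_const_mul 2 y).const_mul (4 * Real.pi)).mul
      ((hasDerivAt_sqrtMoment hm h0 hφM (hr0 y)).comp y (hrd y)))).congr_deriv ?_
    simp only [Function.comp]
    rw [hgeq]
    linear_combination 4 * Real.pi * invSqrtMoment φ (r y) * hexp' y
  have hLc : Continuous fun y => 4 * Real.pi * invSqrtMoment φ (r y) :=
    continuous_const.mul ((continuousOn_invSqrtMoment hm h0 hφM).comp_continuous hrc hr0)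
  refine exists_equationOfState (A := 4 * Real.pi * M)
    (B := 4 * Real.pi / 3 * cubeMoment φ (r 1)) hh hg hLc
    (fun y hy => ⟨if_pos hy, if_pos hy⟩) (fun y hy => ?_) (fun y hy => ?_)
    (fun y hy => mul_pos (by positivity) (hLpos y hy)) (fun y hy => ?_) (fun y _ => ?_)
    (mul_pos (by positivity) (hTpos 1 one_pos)) (fun y hy => ?_)
  · rw [hheq]
    exact mul_pos (by positivity) (hTpos y hy)
  · rw [hgeq, lt_add_iff_pos_right]
    exact mul_pos (by positivity) (hNpos y hy)
  · rw [hgeq, hheq, ← hexp]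
    have := mul_le_mul_of_nonneg_left (cubeMoment_add_le hm h0 hφM (hr0 y))
      (show 0 ≤ 4 * Real.pi * Real.exp (4 * y) by positivity)
    linarith
  · rw [hgeq, add_sub_cancel_left]
    have := mul_le_mul_of_nonneg_left (sqrtMoment_le hm h0 hφM (hr0 y))
      (show 0 ≤ 4 * Real.pi * Real.exp (2 * y) by positivity)
    linarith
  · rw [hheq]
    have hle : r y ≤ r 1 := Real.exp_le_exp.2 (by linarith)
    have := mul_le_mul_of_nonneg_left (cubeMoment_anti hm h0 hφM (hr0 y) hle)
      (show 0 ≤ 4 * Real.pi / 3 * Real.exp (4 * y) by positivity)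
    linarith

end
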